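/- Let 𝒩 be a network architecture whose buffer structure satisfies the buffer axioms B1–B8. Then for every finite word w, every send event x, and every receive event y: if w·y is 𝒩-channel-compliant, then w·x·y is 𝒩-channel-compliant (channel compliance fact CC5). -/

import Mathlib

/-!
After running `w`, the buffer on the channel of the receive event admits the removal. If the send
event uses another channel, that buffer is untouched; if it uses the same channel, axiom B4 says
that an insertion preserves the possibility of a removal. The insertion is always defined by B1.
-/

/-- Operations on a buffer: insert or remove a message. -/
inductive BOp (M : Type) where
  | ins (m : M)
  | rem (m : M)

/-- Apply a single buffer operation. -/
def applyOp {M B : Type} (ins rem : M → B → Option B) : BOp M → B → Option B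
  | .ins m, b => ins m b
  | .rem m, b => rem m b

/-- Apply a finite sequence of buffer operations, left to right. -/
def applySeq {M B : Type} (ins rem : M → B → Option B) : List (BOp M) → B → Option B
  | [], b => some b
  | op :: σ, b => (applyOp ins rem op b).bind (applySeq ins rem σ)

/-- The eight buffer axioms B1–B8 for a buffer structure with contents `B`,
partial operations `ins`, `rem` and empty buffer `b0`. -/
structure BufferAxioms (M B : Type) (ins rem : M → B → Option B) (b0 : B) : Prop where
  b1 : ∀ (m : M) (b : B), (ins m b).isSome
  b2 : ∀ m : M, ((ins m b0).bind (rem m)).isSome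
  b3 : ∀ m : M, rem m b0 = none
  b4 : ∀ (m m' : M) (b : B), (rem m b).isSome → ((ins m' b).bind (rem m)).isSome
  b5 : ∀ (m : M) (b : B) (σ : List (BOp M)), BOp.rem m ∉ σ →
        ((ins m b).bind (applySeq ins rem σ)).isSome → (applySeq ins rem σ b).isSome
  b6 : ∀ (m : M) (b : B), (rem m b).isSome →
        (ins m b).bind (rem m) = (rem m b).bind (ins m)
  b7 : ∀ (m m' : M) (b : B), m ≠ m' →
        (ins m b).bind (rem m') = (rem m' b).bind (ins m)
  b8 : ∀ (m : M) (b : B) (σ : List (BOp M)), rem m b = none → BOp.rem m ∉ σ →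
        (((ins m b).bind (applySeq ins rem σ)).bind (rem m)).isSome →
        ((ins m b).bind (applySeq ins rem σ)).bind (rem m) = applySeq ins rem σ b

/-- Asynchronous events: send events `p▷q!v` and receive events `p▷q?v`. -/
inductive Event (P V : Type) where
  | send (p q : P) (v : V)
  | recv (p q : P) (v : V)
deriving DecidableEq

/-- The active participant of an event: the sender of a send, the receiver of a receive. -/
def Event.active {P V : Type} : Event P V → P
  | .send p _ _ => p
  | .recv _ q _ => q

/-- A network architecture: channels `C`, buffer contents `B`, a channel map,
partial insert/remove operations, and an empty buffer. -/
structure NetArch (P V C B : Type) where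
  chan : P → P → C
  insert : P × P × V → B → Option B
  remove : P × P × V → B → Option B
  b0 : B

variable {P V C B : Type}

/-- Executing a single event on a channel state. -/
def NetArch.step [DecidableEq C] (N : NetArch P V C B) :
    Event P V → (C → B) → Option (C → B)
  | .send p q v, ξ => (N.insert (p, q, v) (ξ (N.chan p q))).map (Function.update ξ (N.chan p q))
  | .recv p q v, ξ => (N.remove (p, q, v) (ξ (N.chan p q))).map (Function.update ξ (N.chan p q))

/-- Executing a finite word of events from a channel state. -/
def NetArch.runFrom [DecidableEq C] (N : NetArch P V C B) :
    List (Event P V) → (C → B) → Option (C → B)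
  | [], ξ => some ξ
  | e :: w, ξ => (N.step e ξ).bind (N.runFrom w)

/-- The initial channel state: every channel holds the empty buffer. -/
def NetArch.init (N : NetArch P V C B) : C → B := fun _ => N.b0

/-- A finite word is channel-compliant if executing it from the initial channel
state is defined at every step. -/
def NetArch.compliant [DecidableEq C] (N : NetArch P V C B) (w : List (Event P V)) : Prop :=
  (N.runFrom w N.init).isSome

/-- A finite word is channel-matched if it is channel-compliant and reaches the
initial (all-empty) channel state. -/
def NetArch.matched [DecidableEq C] (N : NetArch P V C B) (w : List (Event P V)) : Prop :=
  N.runFrom w N.init = some N.init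

/-- Projection of a word onto the events in which participant `r` is active. -/
def proj [DecidableEq P] (r : P) (w : List (Event P V)) : List (Event P V) :=
  w.filter (fun e => decide (e.active = r))

/-- Equality under local projection. -/
def equivP [DecidableEq P] (w₁ w₂ : List (Event P V)) : Prop :=
  ∀ r : P, proj r w₁ = proj r w₂

/-- `split` replaces every synchronous message exchange `(p,q,v)` by the two
consecutive asynchronous events `p▷q!v · p▷q?v`. -/
def split : List (P × P × V) → List (Event P V)
  | [] => []
  | m :: ρ => Event.send m.1 m.2.1 m.2.2 :: Event.recv m.1 m.2.1 m.2.2 :: split ρ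

theorem NetArch.runFrom_append [DecidableEq C] (N : NetArch P V C B)
    (w₁ w₂ : List (Event P V)) (ξ : C → B) :
    N.runFrom (w₁ ++ w₂) ξ = (N.runFrom w₁ ξ).bind (N.runFrom w₂) := by
  induction w₁ generalizing ξ with
  | nil => rfl
  | cons e w₁ ih =>
    cases hs : N.step e ξ with
    | none => simp [NetArch.runFrom, hs]
    | some ξ' => simp [NetArch.runFrom, hs, ih]

/-- CC5: for a network architecture satisfying the buffer axioms B1–B8, if `w·y`
is channel-compliant for a receive event `y`, then so is `w·x·y` for any send
event `x`. -/
theorem cc5_intro_send {P V C B : Type} [DecidableEq C] (N : NetArch P V C B)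
    (hN : BufferAxioms (P × P × V) B N.insert N.remove N.b0)
    (w : List (Event P V))
    (p q : P) (hpq : p ≠ q) (v : V)
    (p' q' : P) (hp'q' : p' ≠ q') (v' : V)
    (h : N.compliant (w ++ [Event.recv p q v])) :
    N.compliant (w ++ [Event.send p' q' v', Event.recv p q v]) := by
  unfold NetArch.compliant at *
  rw [NetArch.runFrom_append] at *
  cases hw : N.runFrom w N.init with
  | none => simp [hw] at h
  | some ξ =>
    obtain ⟨b, hb⟩ := Option.isSome_iff_exists.mp (hN.b1 (p', q', v') (ξ (N.chan p' q')))
    have hr : (N.remove (p, q, v) (ξ (N.chan p q))).isSome := by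
      cases hrem : N.remove (p, q, v) (ξ (N.chan p q)) with
      | none => simp [hw, NetArch.runFrom, NetArch.step, hrem] at h
      | some b' => rfl
    have hr' : (N.remove (p, q, v)
        (Function.update ξ (N.chan p' q') b (N.chan p q))).isSome := by
      by_cases hc : N.chan p q = N.chan p' q'
      · have h4 := hN.b4 (p, q, v) (p', q', v') _ hr
        rw [hc, hb] at h4
        rw [hc, Function.update_self]
        exact h4
      · rwa [Function.update_of_ne hc]
    obtain ⟨b'', hb''⟩ := Option.isSome_iff_exists.mp hr'
    simp [NetArch.runFrom, NetArch.step, hb, hb'']
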